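/- Let (A, {Δ(λ)}) be a split quasi-hereditary algebra over a commutative Noetherian ring R and let T and Q both be characteristic tilting modules of A. Then add T = add Q, and consequently End_A(T)^op and End_A(Q)^op are Morita equivalent. -/

import Mathlib

open scoped TensorProduct
open CategoryTheory

noncomputable section

section Core

variable (R : Type) [CommRing R] (A : Type) [Ring A] [Algebra R A]

/-- The action of `a : A` on an `A`-module as an `R`-linear endomorphism. -/
def actL (M : Type) [AddCommGroup M] [Module R M] [Module A M] [IsScalarTower R A M]
    (a : A) : M →ₗ[R] M where
  toFun m := a • m
  map_add' := smul_add a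
  map_smul' r m := (smul_comm r a m).symm

/-- The right `A`-module (i.e. `Aᵐᵒᵖ`-module) structure on the `R`-linear dual of a left
`A`-module `M`, given by `(aᵒᵖ • f) m = f (a • m)`. -/
instance dualModule (M : Type) [AddCommGroup M] [Module R M] [Module A M]
    [IsScalarTower R A M] : Module Aᵐᵒᵖ (M →ₗ[R] R) where
  smul a f := f.comp (actL R A M a.unop)
  one_smul f := by ext m; show f ((1 : Aᵐᵒᵖ).unop • m) = f m; simp
  mul_smul a b f := by
    ext m
    show f ((a * b).unop • m) = f (b.unop • a.unop • m)
    simp [mul_smul]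
  smul_zero a := rfl
  smul_add a f g := rfl
  add_smul a b f := by
    ext m
    show f ((a + b).unop • m) = f (a.unop • m) + f (b.unop • m)
    simp [add_smul]
  zero_smul f := by ext m; show f ((0 : Aᵐᵒᵖ).unop • m) = 0; simp

@[simp] lemma dualModule_smul_apply (M : Type) [AddCommGroup M] [Module R M] [Module A M]
    [IsScalarTower R A M] (a : Aᵐᵒᵖ) (f : M →ₗ[R] R) (m : M) :
    (a • f) m = f (a.unop • m) := rfl

instance dualTower (M : Type) [AddCommGroup M] [Module R M] [Module A M]
    [IsScalarTower R A M] : IsScalarTower R Aᵐᵒᵖ (M →ₗ[R] R) := by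
  constructor
  intro r a f
  ext m
  show f ((r • a).unop • m) = r • f (a.unop • m)
  rw [MulOpposite.unop_smul, smul_assoc, map_smul]

/-- The left `A`-module structure on the `R`-linear dual of a right `A`-module
(i.e. an `Aᵐᵒᵖ`-module) `M`, given by `(a • f) m = f (aᵒᵖ • m)`. -/
instance dualModule' (M : Type) [AddCommGroup M] [Module R M] [Module Aᵐᵒᵖ M]
    [IsScalarTower R Aᵐᵒᵖ M] : Module A (M →ₗ[R] R) where
  smul a f := f.comp (actL R Aᵐᵒᵖ M (MulOpposite.op a))
  one_smul f := by ext m; show f (MulOpposite.op (1 : A) • m) = f m; simp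
  mul_smul a b f := by
    ext m
    show f (MulOpposite.op (a * b) • m) = f (MulOpposite.op b • MulOpposite.op a • m)
    rw [MulOpposite.op_mul, mul_smul]
  smul_zero a := rfl
  smul_add a f g := rfl
  add_smul a b f := by
    ext m
    show f (MulOpposite.op (a + b) • m) = f (MulOpposite.op a • m) + f (MulOpposite.op b • m)
    rw [MulOpposite.op_add, add_smul, map_add]
  zero_smul f := by ext m; show f (MulOpposite.op (0 : A) • m) = 0; simp

@[simp] lemma dualModule'_smul_apply (M : Type) [AddCommGroup M] [Module R M] [Module Aᵐᵒᵖ M]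
    [IsScalarTower R Aᵐᵒᵖ M] (a : A) (f : M →ₗ[R] R) (m : M) :
    (a • f) m = f (MulOpposite.op a • m) := rfl

instance dualTower' (M : Type) [AddCommGroup M] [Module R M] [Module Aᵐᵒᵖ M]
    [IsScalarTower R Aᵐᵒᵖ M] : IsScalarTower R A (M →ₗ[R] R) := by
  constructor
  intro r a f
  ext m
  show f (MulOpposite.op (r • a) • m) = r • f (MulOpposite.op a • m)
  rw [MulOpposite.op_smul, smul_assoc, map_smul]

variable (Λ : Type) [Fintype Λ] [PartialOrder Λ]

/-- Data witnessing that `X` is isomorphic to `Δ(λ) ⊗_R U` for some `λ ∈ S` and some finitely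
generated projective `R`-module `U`. -/
structure TensorFactor (Δ : Λ → Type) [∀ l, AddCommGroup (Δ l)] [∀ l, Module R (Δ l)]
    [∀ l, Module A (Δ l)] [∀ l, IsScalarTower R A (Δ l)]
    (S : Set Λ) (X : Type) [AddCommGroup X] [Module A X] : Type 1 where
  lam : Λ
  mem : lam ∈ S
  U : ModuleCat.{0} R
  fin : Module.Finite R U
  proj : Module.Projective R U
  iso : X ≃ₗ[A] (TensorProduct R (Δ lam) U)

/-- `M` belongs to `F(Δ̃_S)`: it is a finitely generated `A`-module with a finite filtration
whose factors are of the form `Δ(λ) ⊗_R U`, `λ ∈ S`, `U` a finitely generated projective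
`R`-module. -/
def InFilt (Δ : Λ → Type) [∀ l, AddCommGroup (Δ l)] [∀ l, Module R (Δ l)]
    [∀ l, Module A (Δ l)] [∀ l, IsScalarTower R A (Δ l)]
    (S : Set Λ) (M : Type) [AddCommGroup M] [Module A M] : Prop :=
  Module.Finite A M ∧
  ∃ (n : ℕ) (c : Fin (n + 1) → Submodule A M), c 0 = ⊥ ∧ c (Fin.last n) = ⊤ ∧ Monotone c ∧
    ∀ i : Fin n, Nonempty (TensorFactor R A Λ Δ S
      (↥(c i.succ) ⧸ (Submodule.comap (c i.succ).subtype (c i.castSucc))))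

/-- Data witnessing that `X` is isomorphic to `F(λ)` for some `λ ∈ S`. -/
structure PlainFactor (F : Λ → Type) [∀ l, AddCommGroup (F l)] [∀ l, Module A (F l)]
    (S : Set Λ) (X : Type) [AddCommGroup X] [Module A X] : Type 1 where
  lam : Λ
  mem : lam ∈ S
  iso : X ≃ₗ[A] F lam

/-- `M` has a finite filtration with factors among the modules `F(λ)`, `λ ∈ S`. -/
def InFiltPlain (F : Λ → Type) [∀ l, AddCommGroup (F l)] [∀ l, Module A (F l)]
    (S : Set Λ) (M : Type) [AddCommGroup M] [Module A M] : Prop :=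
  Module.Finite A M ∧
  ∃ (n : ℕ) (c : Fin (n + 1) → Submodule A M), c 0 = ⊥ ∧ c (Fin.last n) = ⊤ ∧ Monotone c ∧
    ∀ i : Fin n, Nonempty (PlainFactor A Λ F S
      (↥(c i.succ) ⧸ (Submodule.comap (c i.succ).subtype (c i.castSucc))))

/-- `X` is a direct summand of `Y` (as `A`-modules). -/
def IsDirectSummand (X Y : Type) [AddCommGroup X] [Module A X] [AddCommGroup Y]
    [Module A Y] : Prop :=
  ∃ (i : X →ₗ[A] Y) (p : Y →ₗ[A] X), p.comp i = LinearMap.id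

/-- `X` belongs to the additive closure `add T`. -/
def InAdd (T : Type) [AddCommGroup T] [Module A T] (X : Type) [AddCommGroup X]
    [Module A X] : Prop :=
  ∃ n : ℕ, IsDirectSummand A X (Fin n → T)

/-- A split quasi-hereditary structure on the `R`-algebra `A` with standard modules
`Δ(λ)`, `λ ∈ Λ` (following Rouquier's module-theoretic definition). -/
structure SplitQH (Δ : Λ → Type) [∀ l, AddCommGroup (Δ l)] [∀ l, Module R (Δ l)]
    [∀ l, Module A (Δ l)] [∀ l, IsScalarTower R A (Δ l)] : Type 1 where
  algFin : Module.Finite R A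
  algProj : Module.Projective R A
  deltaFinA : ∀ l, Module.Finite A (Δ l)
  deltaFinR : ∀ l, Module.Finite R (Δ l)
  deltaProjR : ∀ l, Module.Projective R (Δ l)
  hom_le : ∀ l m : Λ, (∃ f : Δ l →ₗ[A] Δ m, f ≠ 0) → l ≤ m
  endIso : ∀ l, Nonempty ((Module.End A (Δ l)) ≃ₐ[R] R)
  P : Λ → ModuleCat.{0} A
  P_proj : ∀ l, Module.Projective A (P l)
  P_fin : ∀ l, Module.Finite A (P l)
  epi : ∀ l, (P l : Type) →ₗ[A] Δ l
  epi_surj : ∀ l, Function.Surjective (epi l)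
  ker_filt : ∀ l, InFilt R A Λ Δ {m | l < m} ↥(LinearMap.ker (epi l))
  add_gen : ∀ (Q : ModuleCat.{0} A), Module.Finite A Q → Module.Projective A Q →
    InAdd A (∀ l, (P l : Type)) Q

/-- Vanishing of `Ext^i_A(M, N)` (computed in the abelian category of `A`-modules). -/
def extVanish (M : Type) [AddCommGroup M] [Module A M] (N : Type) [AddCommGroup N]
    [Module A N] (i : ℕ) : Prop :=
  Subsingleton (((Ext ℤ (ModuleCat.{0} A) i).obj
    (Opposite.op (ModuleCat.of A M))).obj (ModuleCat.of A N))

/-- `∇` is a family of costandard modules for the split quasi-hereditary algebra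
`(A, {Δ(λ)})`: the `R`-linear duals `D∇(λ)` make `A^op` split quasi-hereditary (with the same
poset), and the `Ext`-orthogonality relations with the standard modules hold. -/
def IsCostandard (Δ : Λ → Type) [∀ l, AddCommGroup (Δ l)] [∀ l, Module R (Δ l)]
    [∀ l, Module A (Δ l)] [∀ l, IsScalarTower R A (Δ l)]
    (N : Λ → Type) [∀ l, AddCommGroup (N l)] [∀ l, Module R (N l)]
    [∀ l, Module A (N l)] [∀ l, IsScalarTower R A (N l)] : Prop :=
  Nonempty (SplitQH R Aᵐᵒᵖ Λ (fun l => (N l →ₗ[R] R))) ∧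
  (∀ l, Nonempty ((Δ l →ₗ[A] N l) ≃ₗ[R] R)) ∧
  (∀ l m, l ≠ m → ∀ f : Δ l →ₗ[A] N m, f = 0) ∧
  (∀ l m : Λ, ∀ i : ℕ, 0 < i → extVanish A (Δ l) (N m) i)

/-- A bundled family of costandard modules. -/
structure CostandardFamily (Δ : Λ → Type) [∀ l, AddCommGroup (Δ l)] [∀ l, Module R (Δ l)]
    [∀ l, Module A (Δ l)] [∀ l, IsScalarTower R A (Δ l)] : Type 1 where
  Nab : Λ → Type
  [acg : ∀ l, AddCommGroup (Nab l)]
  [modR : ∀ l, Module R (Nab l)]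
  [modA : ∀ l, Module A (Nab l)]
  [tower : ∀ l, IsScalarTower R A (Nab l)]
  cost : IsCostandard R A Λ Δ Nab

attribute [instance] CostandardFamily.acg CostandardFamily.modR CostandardFamily.modA
  CostandardFamily.tower

/-- `T` is a family of (partial) tilting modules forming a characteristic tilting module
`⊕ T(λ)`: each `T(λ)` admits an exact sequence `0 → Δ(λ) → T(λ) → X(λ) → 0` with
`X(λ) ∈ F(Δ̃_{μ<λ})` and an exact sequence `0 → Y(λ) → T(λ) → ∇(λ) → 0` with
`Y(λ) ∈ F(∇̃_{μ<λ})`. -/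
def IsCharTilting (Δ : Λ → Type) [∀ l, AddCommGroup (Δ l)] [∀ l, Module R (Δ l)]
    [∀ l, Module A (Δ l)] [∀ l, IsScalarTower R A (Δ l)]
    (N : Λ → Type) [∀ l, AddCommGroup (N l)] [∀ l, Module R (N l)]
    [∀ l, Module A (N l)] [∀ l, IsScalarTower R A (N l)]
    (T : Λ → Type) [∀ l, AddCommGroup (T l)] [∀ l, Module A (T l)] : Prop :=
  ∀ l : Λ,
    (∃ f : Δ l →ₗ[A] T l, Function.Injective f ∧
      InFilt R A Λ Δ {m | m < l} ((T l) ⧸ LinearMap.range f)) ∧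
    (∃ g : T l →ₗ[A] N l, Function.Surjective g ∧
      InFilt R A Λ N {m | m < l} ↥(LinearMap.ker g))

end Core

end

noncomputable section

/-- Two rings are Morita equivalent if their module categories are equivalent. -/
def MoritaEquiv (B C : Type) [Ring B] [Ring C] : Prop :=
  Nonempty (ModuleCat.{0} B ≌ ModuleCat.{0} C)

section Lifting

variable {A : Type} [Ring A]

/-- `LiftsAlong M N` says that `M` has the lifting property against every surjection with
kernel `N`, i.e. `Ext¹_A(M, N) = 0`. -/
def LiftsAlong (M N : Type) [AddCommGroup M] [Module A M] [AddCommGroup N] [Module A N] : Prop :=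
  ∀ (L C : Type) [AddCommGroup L] [Module A L] [AddCommGroup C] [Module A C]
    (i : N →ₗ[A] L) (p : L →ₗ[A] C), Function.Injective i → Function.Surjective p →
    Function.Exact i p → ∀ φ : M →ₗ[A] C, ∃ ψ : M →ₗ[A] L, p ∘ₗ ψ = φ

/-- `ExtendsAlong M N` says that `N` has the extension property against every injection with
cokernel `M`, i.e. `Ext¹_A(M, N) = 0`. -/
def ExtendsAlong (M N : Type) [AddCommGroup M] [Module A M] [AddCommGroup N] [Module A N] : Prop :=
  ∀ (K L : Type) [AddCommGroup K] [Module A K] [AddCommGroup L] [Module A L]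
    (i : K →ₗ[A] L) (p : L →ₗ[A] M), Function.Injective i → Function.Surjective p →
    Function.Exact i p → ∀ f : K →ₗ[A] N, ∃ h : L →ₗ[A] N, h ∘ₗ i = f

variable {M N : Type} [AddCommGroup M] [Module A M] [AddCommGroup N] [Module A N]

/-- A linear map whose image lies in the range of an injective map factors through it. -/
lemma exists_comp_eq_of_forall_mem_range {K L X : Type} [AddCommGroup K] [Module A K]
    [AddCommGroup L] [Module A L] [AddCommGroup X] [Module A X]
    {i : K →ₗ[A] L} (hi : Function.Injective i) (u : X →ₗ[A] L)
    (hu : ∀ x, u x ∈ LinearMap.range i) : ∃ g : X →ₗ[A] K, i ∘ₗ g = u := by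
  refine ⟨(LinearEquiv.ofInjective i hi).symm.toLinearMap ∘ₗ u.codRestrict _ hu, ?_⟩
  ext x
  have := LinearEquiv.apply_symm_apply (LinearEquiv.ofInjective i hi) (u.codRestrict _ hu x)
  exact congrArg Subtype.val this

/-- A linear map that vanishes on the kernel of a surjective map factors through it. -/
lemma exists_comp_eq_of_ker_le {K L X : Type} [AddCommGroup K] [Module A K]
    [AddCommGroup L] [Module A L] [AddCommGroup X] [Module A X]
    {p : K →ₗ[A] L} (hp : Function.Surjective p) (u : K →ₗ[A] X)
    (hu : ∀ x, p x = 0 → u x = 0) : ∃ g : L →ₗ[A] X, g ∘ₗ p = u := by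
  refine ⟨(LinearMap.ker p).liftQ u (fun x hx => hu x hx) ∘ₗ
    (p.quotKerEquivOfSurjective hp).symm.toLinearMap, ?_⟩
  ext x
  have : (p.quotKerEquivOfSurjective hp).symm (p x) = Submodule.Quotient.mk x := by
    rw [LinearEquiv.symm_apply_eq]; rfl
  simp only [LinearMap.comp_apply, LinearEquiv.coe_coe, this]
  exact Submodule.liftQ_apply _ _ _

lemma liftsAlong_of_extVanish (h : extVanish A M N 1) : LiftsAlong (A := A) M N := by
  intro L C _ _ _ _ i p hi hp hip φ
  let P := ProjectiveResolution.of (ModuleCat.of A M)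
  have hex : (P.complex.linearYonedaObj ℤ (ModuleCat.of A N)).ExactAt 1 := by
    rw [HomologicalComplex.exactAt_iff_isZero_homology]
    have : Subsingleton (((Ext ℤ (ModuleCat.{0} A) 1).obj
      (Opposite.op (ModuleCat.of A M))).obj (ModuleCat.of A N)) := h
    exact (ModuleCat.isZero_of_subsingleton _).of_iso (P.isoExt 1 (ModuleCat.of A N)).symm
  rw [HomologicalComplex.exactAt_iff' _ 0 1 2 (by simp) (by simp),
    ShortComplex.moduleCat_exact_iff] at hex
  have hepi : Epi (ModuleCat.ofHom p) := (ModuleCat.epi_iff_surjective _).2 hp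
  obtain ⟨e, hd, he, hdesc⟩ : ∃ e : P.complex.X 0 ⟶ ModuleCat.of A M,
      P.complex.d 1 0 ≫ e = 0 ∧ Epi e ∧ ∀ w : P.complex.X 0 ⟶ ModuleCat.of A L,
        P.complex.d 1 0 ≫ w = 0 → ∃ ψ : ModuleCat.of A M ⟶ ModuleCat.of A L, e ≫ ψ = w :=
    ⟨P.π.f 0, P.complex_d_comp_π_f_zero, inferInstanceAs (Epi (P.π.f 0)), fun w hw => by
      obtain ⟨ψ, hψ⟩ := Limits.CokernelCofork.IsColimit.desc' P.isColimitCokernelCofork w hw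
      exact ⟨ψ, hψ⟩⟩
  let u : P.complex.X 0 ⟶ ModuleCat.of A L :=
    Projective.factorThru (e ≫ ModuleCat.ofHom φ) (ModuleCat.ofHom p)
  have hu : u ≫ ModuleCat.ofHom p = e ≫ ModuleCat.ofHom φ :=
    Projective.factorThru_comp _ _
  obtain ⟨g, hg⟩ := exists_comp_eq_of_forall_mem_range hi (P.complex.d 1 0 ≫ u).hom (by
    intro x
    refine (hip _).1 ?_
    have : (P.complex.d 1 0 ≫ u) ≫ ModuleCat.ofHom p = 0 := by
      rw [Category.assoc, hu, reassoc_of% hd, Limits.zero_comp]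
    exact congrArg (fun k => k.hom x) this)
  have hg' : ModuleCat.ofHom g ≫ ModuleCat.ofHom i = P.complex.d 1 0 ≫ u := by
    ext x; exact congrArg (fun k => k x) hg
  have hmono : Mono (ModuleCat.ofHom i) := (ModuleCat.mono_iff_injective _).2 hi
  have hdg : P.complex.d 2 1 ≫ ModuleCat.ofHom g = 0 := by
    rw [← cancel_mono (ModuleCat.ofHom i), Category.assoc, hg']
    simp
  obtain ⟨(k : P.complex.X 0 ⟶ ModuleCat.of A N), hk⟩ := hex (ModuleCat.ofHom g) hdg
  have hk' : P.complex.d 1 0 ≫ k = ModuleCat.ofHom g := hk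
  obtain ⟨ψ, hψ⟩ := hdesc (u - k ≫ ModuleCat.ofHom i) (by
      rw [Preadditive.comp_sub, reassoc_of% hk', hg', sub_self])
  refine ⟨ψ.hom, ?_⟩
  have hfin : ψ ≫ ModuleCat.ofHom p = ModuleCat.ofHom φ := by
    rw [← cancel_epi e, reassoc_of% hψ, Preadditive.sub_comp, hu, Category.assoc]
    have : ModuleCat.ofHom i ≫ ModuleCat.ofHom p = 0 := by
      ext x; exact hip.apply_apply_eq_zero x
    rw [this, Limits.comp_zero, sub_zero]
  exact congrArg ModuleCat.Hom.hom hfin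

lemma ExtendsAlong.liftsAlong (h : ExtendsAlong (A := A) M N) : LiftsAlong (A := A) M N := by
  intro L C _ _ _ _ i p hi hp hip φ
  let E : Submodule A (L × M) := LinearMap.eqLocus (p ∘ₗ LinearMap.fst A L M)
    (φ ∘ₗ LinearMap.snd A L M)
  have hE : ∀ x : E, p x.1.1 = φ x.1.2 := fun x => x.2
  let i' : N →ₗ[A] E := (LinearMap.inl A L M ∘ₗ i).codRestrict E (fun n => by
    change p (i n) = φ 0
    rw [map_zero, hip.apply_apply_eq_zero])
  let p' : E →ₗ[A] M := LinearMap.snd A L M ∘ₗ E.subtype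
  have hi' : ∀ n, (i' n : L × M) = (i n, 0) := fun n => rfl
  have hp' : Function.Surjective p' := fun m => by
    obtain ⟨y, hy⟩ := hp (φ m)
    exact ⟨⟨(y, m), hy⟩, rfl⟩
  obtain ⟨r, hr⟩ := h N E i' p'
    (fun x y hxy => hi (congrArg (fun z : E => z.1.1) hxy)) hp' (by
      rintro ⟨⟨y, m⟩, hy : p y = φ m⟩
      constructor
      · rintro (rfl : m = 0)
        obtain ⟨n, rfl⟩ := (hip y).1 (by rw [hy, map_zero])
        exact ⟨n, rfl⟩
      · rintro ⟨n, hn⟩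
        exact (congrArg (fun z : E => z.1.2) hn).symm) LinearMap.id
  obtain ⟨ψ, hψ⟩ := exists_comp_eq_of_ker_le hp'
    (LinearMap.fst A L M ∘ₗ E.subtype - i ∘ₗ r) (by
      rintro ⟨⟨y, m⟩, hy : p y = φ m⟩ (rfl : m = 0)
      obtain ⟨n, rfl⟩ := (hip y).1 (by rw [hy, map_zero])
      have : r (i' n) = n := congrArg (fun k => k n) hr
      change i n - i (r (i' n)) = 0
      rw [this, sub_self])
  refine ⟨ψ, ?_⟩
  ext m
  obtain ⟨x, rfl⟩ := hp' m
  have : ψ (p' x) = x.1.1 - i (r x) := congrArg (fun k => k x) hψ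
  rw [LinearMap.comp_apply, this, map_sub, hip.apply_apply_eq_zero, sub_zero, hE]
  rfl

lemma LiftsAlong.extendsAlong (h : LiftsAlong (A := A) M N) : ExtendsAlong (A := A) M N := by
  intro K L _ _ _ _ i p hi hp hip f
  let S : Submodule A (N × L) := LinearMap.range (f.prod (-i))
  let q : (N × L) →ₗ[A] (N × L) ⧸ S := S.mkQ
  have hq : ∀ x, q x = 0 ↔ ∃ k, f k = x.1 ∧ -i k = x.2 := fun x => by
    simp only [q, Submodule.mkQ_apply, Submodule.Quotient.mk_eq_zero, S, LinearMap.mem_range,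
      Prod.ext_iff]
    rfl
  let j : N →ₗ[A] (N × L) ⧸ S := q ∘ₗ LinearMap.inl A N L
  obtain ⟨s, hs⟩ := exists_comp_eq_of_ker_le (p := q) S.mkQ_surjective
    (p ∘ₗ LinearMap.snd A N L) (fun x hx => by
      obtain ⟨k, -, hk⟩ := (hq x).1 hx
      simp [← hk, hip.apply_apply_eq_zero])
  have hsq : ∀ x, s (q x) = p x.2 := fun x => congrArg (fun k => k x) hs
  have hj : Function.Injective j := by
    rw [injective_iff_map_eq_zero]
    intro n hn
    obtain ⟨k, hk, hk'⟩ := (hq (n, 0)).1 hn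
    have : k = 0 := hi (by simpa using hk')
    simpa [this] using hk.symm
  have hex : Function.Exact j s := by
    intro y
    obtain ⟨⟨n, x⟩, rfl⟩ := S.mkQ_surjective y
    constructor
    · intro hy
      obtain ⟨k, rfl⟩ := (hip x).1 ((hsq (n, x)).symm.trans hy)
      refine ⟨n + f k, ?_⟩
      change q (n + f k, 0) = q (n, i k)
      rw [← sub_eq_zero, ← map_sub]
      exact (hq _).2 ⟨k, by simp, by simp⟩
    · rintro ⟨n', hn'⟩
      rw [← hn']
      exact (hsq (n', 0)).trans (map_zero p)
  obtain ⟨σ, hσ⟩ := h _ M j s hj (fun m => by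
    obtain ⟨x, rfl⟩ := hp m
    exact ⟨q (0, x), hsq _⟩) hex LinearMap.id
  obtain ⟨g, hg⟩ := exists_comp_eq_of_forall_mem_range hj
    (q ∘ₗ LinearMap.inr A N L - σ ∘ₗ p) (fun x => by
      refine (hex _).1 ?_
      have : s (σ (p x)) = p x := congrArg (fun k => k (p x)) hσ
      simp [hsq, this])
  refine ⟨g, ?_⟩
  ext k
  refine hj ?_
  have h₁ : j (g (i k)) = q (0, i k) - σ (p (i k)) := congrArg (fun u => u (i k)) hg
  change j (g (i k)) = j (f k)
  rw [h₁, hip.apply_apply_eq_zero, map_zero, sub_zero, ← sub_eq_zero]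
  change q (0, i k) - q (f k, 0) = 0
  rw [← map_sub]
  exact (hq _).2 ⟨-k, by simp, by simp⟩

variable {M₁ M₂ N₁ N₂ : Type} [AddCommGroup M₁] [Module A M₁] [AddCommGroup M₂] [Module A M₂]
  [AddCommGroup N₁] [Module A N₁] [AddCommGroup N₂] [Module A N₂]

lemma ExtendsAlong.of_exact {α : M₁ →ₗ[A] M} {β : M →ₗ[A] M₂} (hα : Function.Injective α)
    (hβ : Function.Surjective β) (hαβ : Function.Exact α β)
    (h₁ : ExtendsAlong (A := A) M₁ N) (h₂ : ExtendsAlong (A := A) M₂ N) :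
    ExtendsAlong (A := A) M N := by
  intro K L _ _ _ _ i p hi hp hip f
  let L' : Submodule A L := LinearMap.ker (β ∘ₗ p)
  obtain ⟨p', hp'⟩ := exists_comp_eq_of_forall_mem_range hα (p ∘ₗ L'.subtype)
    (fun x => (hαβ _).1 x.2)
  have hp'' : ∀ x : L', α (p' x) = p x := fun x => congrArg (fun k => k x) hp'
  let i' : K →ₗ[A] L' := i.codRestrict L' (fun k => by
    simp [L', hip.apply_apply_eq_zero])
  obtain ⟨f', hf'⟩ := h₁ K L' i' p' (fun x y hxy => hi (congrArg Subtype.val hxy))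
    (fun m => by
      obtain ⟨x, hx⟩ := hp (α m)
      refine ⟨⟨x, ?_⟩, hα ?_⟩
      · simp [L', hx, hαβ.apply_apply_eq_zero]
      · rw [hp'', hx])
    (fun x => by
      rw [← hα.eq_iff, hp'', map_zero]
      refine (hip _).trans ⟨?_, ?_⟩
      · rintro ⟨k, hk⟩
        exact ⟨k, Subtype.ext hk⟩
      · rintro ⟨k, hk⟩
        exact ⟨k, congrArg Subtype.val hk⟩) f
  obtain ⟨h, hh⟩ := h₂ L' L L'.subtype (β ∘ₗ p) L'.injective_subtype (hβ.comp hp)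
    (fun x => by simp [L']) f'
  refine ⟨h, ?_⟩
  rw [← hf', ← hh]
  rfl

lemma LiftsAlong.of_exact {α : N₁ →ₗ[A] N} {β : N →ₗ[A] N₂} (hα : Function.Injective α)
    (hβ : Function.Surjective β) (hαβ : Function.Exact α β)
    (h₁ : LiftsAlong (A := A) M N₁) (h₂ : LiftsAlong (A := A) M N₂) :
    LiftsAlong (A := A) M N := by
  intro L C _ _ _ _ i p hi hp hip φ
  let S : Submodule A L := LinearMap.range (i ∘ₗ α)
  obtain ⟨i', hi'⟩ := exists_comp_eq_of_ker_le hβ (S.mkQ ∘ₗ i) (fun x hx => by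
    obtain ⟨n, rfl⟩ := (hαβ x).1 hx
    simp [S])
  have hi'' : ∀ x, i' (β x) = S.mkQ (i x) := fun x => congrArg (fun k => k x) hi'
  obtain ⟨p', hp'⟩ := exists_comp_eq_of_ker_le S.mkQ_surjective p (fun x hx => by
    rw [Submodule.mkQ_apply, Submodule.Quotient.mk_eq_zero] at hx
    obtain ⟨n, rfl⟩ := hx
    exact hip.apply_apply_eq_zero _)
  have hp'' : ∀ x, p' (S.mkQ x) = p x := fun x => congrArg (fun k => k x) hp'
  obtain ⟨φ', hφ'⟩ := h₂ (L ⧸ S) C i' p'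
    (by
      rw [injective_iff_map_eq_zero]
      intro y hy
      obtain ⟨x, rfl⟩ := hβ y
      rw [hi'', Submodule.mkQ_apply, Submodule.Quotient.mk_eq_zero] at hy
      obtain ⟨n, hn⟩ := hy
      rw [← hi hn, hαβ.apply_apply_eq_zero])
    (fun c => by
      obtain ⟨x, rfl⟩ := hp c
      exact ⟨S.mkQ x, hp'' x⟩)
    (fun y => by
      obtain ⟨x, rfl⟩ := S.mkQ_surjective y
      rw [hp'']
      constructor
      · intro hx
        obtain ⟨n, rfl⟩ := (hip x).1 hx
        exact ⟨β n, hi'' n⟩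
      · rintro ⟨y, hy⟩
        obtain ⟨n, rfl⟩ := hβ y
        rw [← hp'', ← hy, hi'', hp'', hip.apply_apply_eq_zero]) φ
  obtain ⟨ψ, hψ⟩ := h₁ L (L ⧸ S) (i ∘ₗ α) S.mkQ (hi.comp hα) S.mkQ_surjective
    (fun x => by simp [S]) φ'
  refine ⟨ψ, ?_⟩
  rw [← hφ', ← hψ, ← hp']
  rfl

lemma LiftsAlong.of_subsingleton_right [Subsingleton N] : LiftsAlong (A := A) M N := by
  intro L C _ _ _ _ i p hi hp hip φ
  have hinj : Function.Injective p := by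
    rw [injective_iff_map_eq_zero]
    intro x hx
    obtain ⟨n, rfl⟩ := (hip x).1 hx
    rw [Subsingleton.elim n 0, map_zero]
  refine ⟨(LinearEquiv.ofBijective p ⟨hinj, hp⟩).symm.toLinearMap ∘ₗ φ, ?_⟩
  ext m
  exact LinearEquiv.apply_symm_apply (LinearEquiv.ofBijective p ⟨hinj, hp⟩) (φ m)

lemma LiftsAlong.of_subsingleton_left [Subsingleton M] : LiftsAlong (A := A) M N := by
  intro L C _ _ _ _ i p hi hp hip φ
  exact ⟨0, LinearMap.ext fun m => by rw [Subsingleton.elim m 0, map_zero, map_zero]⟩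

lemma ExtendsAlong.pi {ι : Type} {F : ι → Type} [∀ j, AddCommGroup (F j)] [∀ j, Module A (F j)]
    (h : ∀ j, ExtendsAlong (A := A) M (F j)) : ExtendsAlong (A := A) M (∀ j, F j) := by
  intro K L _ _ _ _ i p hi hp hip f
  choose g hg using fun j => h j K L i p hi hp hip (LinearMap.proj j ∘ₗ f)
  refine ⟨LinearMap.pi g, LinearMap.ext fun x => funext fun j => ?_⟩
  exact congrArg (fun k => k x) (hg j)

end Lifting

section Factor

variable {A : Type} [Ring A]

/-- The maps `X → Y` that are finite sums of maps factoring through `T`. -/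
def factorThrough (T X Y : Type) [AddCommGroup T] [Module A T] [AddCommGroup X] [Module A X]
    [AddCommGroup Y] [Module A Y] : AddSubmonoid (X →ₗ[A] Y) :=
  AddSubmonoid.closure {φ | ∃ (a : X →ₗ[A] T) (b : T →ₗ[A] Y), b ∘ₗ a = φ}

variable {T T' X Y Z : Type} [AddCommGroup T] [Module A T] [AddCommGroup T'] [Module A T']
  [AddCommGroup X] [Module A X] [AddCommGroup Y] [Module A Y] [AddCommGroup Z] [Module A Z]

lemma comp_mem_factorThrough (a : X →ₗ[A] T) (b : T →ₗ[A] Y) :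
    b ∘ₗ a ∈ factorThrough (A := A) T X Y :=
  AddSubmonoid.subset_closure ⟨a, b, rfl⟩

lemma factorThrough_comp_left (g : Y →ₗ[A] Z) {φ : X →ₗ[A] Y}
    (hφ : φ ∈ factorThrough (A := A) T X Y) : g ∘ₗ φ ∈ factorThrough (A := A) T X Z := by
  induction hφ using AddSubmonoid.closure_induction with
  | mem φ h =>
    obtain ⟨a, b, rfl⟩ := h
    exact comp_mem_factorThrough a (g ∘ₗ b)
  | zero => rw [LinearMap.comp_zero]; exact zero_mem _
  | add φ ψ _ _ h₁ h₂ => rw [LinearMap.comp_add]; exact add_mem h₁ h₂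

lemma factorThrough_comp_right (g : Z →ₗ[A] X) {φ : X →ₗ[A] Y}
    (hφ : φ ∈ factorThrough (A := A) T X Y) : φ ∘ₗ g ∈ factorThrough (A := A) T Z Y := by
  induction hφ using AddSubmonoid.closure_induction with
  | mem φ h =>
    obtain ⟨a, b, rfl⟩ := h
    exact comp_mem_factorThrough (a ∘ₗ g) b
  | zero => rw [LinearMap.zero_comp]; exact zero_mem _
  | add φ ψ _ _ h₁ h₂ => rw [LinearMap.add_comp]; exact add_mem h₁ h₂

lemma factorThrough_of_id_mem_left
    (h : (LinearMap.id : X →ₗ[A] X) ∈ factorThrough (A := A) T X X) (φ : X →ₗ[A] Y) :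
    φ ∈ factorThrough (A := A) T X Y :=
  factorThrough_comp_left φ h

lemma factorThrough_mono (h : (LinearMap.id : T →ₗ[A] T) ∈ factorThrough (A := A) T' T T) :
    factorThrough (A := A) T X Y ≤ factorThrough (A := A) T' X Y := by
  refine AddSubmonoid.closure_le.2 ?_
  rintro _ ⟨a, b, rfl⟩
  exact factorThrough_comp_right a (factorThrough_comp_left b h)

lemma exists_sum_eq_of_mem_factorThrough {φ : X →ₗ[A] Y}
    (hφ : φ ∈ factorThrough (A := A) T X Y) :
    ∃ (n : ℕ) (a : Fin n → X →ₗ[A] T) (b : Fin n → T →ₗ[A] Y), ∑ j, b j ∘ₗ a j = φ := by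
  induction hφ using AddSubmonoid.closure_induction with
  | mem φ h =>
    obtain ⟨a, b, rfl⟩ := h
    exact ⟨1, fun _ => a, fun _ => b, by simp⟩
  | zero => exact ⟨0, 0, 0, by simp⟩
  | add φ ψ _ _ h₁ h₂ =>
    obtain ⟨n₁, a₁, b₁, rfl⟩ := h₁
    obtain ⟨n₂, a₂, b₂, rfl⟩ := h₂
    exact ⟨n₁ + n₂, Fin.append a₁ a₂, Fin.append b₁ b₂, by simp [Fin.sum_univ_add]⟩

lemma inAdd_iff_id_mem :
    InAdd A T X ↔ (LinearMap.id : X →ₗ[A] X) ∈ factorThrough (A := A) T X X := by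
  constructor
  · rintro ⟨n, i, p, hip⟩
    have : (LinearMap.id : X →ₗ[A] X) =
        ∑ j : Fin n, (p ∘ₗ LinearMap.single A (fun _ => T) j) ∘ₗ (LinearMap.proj j ∘ₗ i) := by
      rw [← hip]
      ext x
      simp only [LinearMap.comp_apply, LinearMap.sum_apply, LinearMap.proj_apply,
        LinearMap.single_apply, ← map_sum, Finset.univ_sum_single]
    rw [this]
    exact sum_mem fun j _ => comp_mem_factorThrough _ _
  · intro h
    obtain ⟨n, a, b, hab⟩ := exists_sum_eq_of_mem_factorThrough h
    refine ⟨n, LinearMap.pi a, ∑ j, b j ∘ₗ LinearMap.proj j, ?_⟩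
    rw [← hab]
    ext x
    simp

lemma id_mem_factorThrough_pi {ι : Type} [Fintype ι] {F : ι → Type} [∀ j, AddCommGroup (F j)]
    [∀ j, Module A (F j)]
    (h : ∀ j, (LinearMap.id : F j →ₗ[A] F j) ∈ factorThrough (A := A) T (F j) (F j)) :
    (LinearMap.id : (∀ j, F j) →ₗ[A] _) ∈ factorThrough (A := A) T (∀ j, F j) (∀ j, F j) := by
  classical
  have : (LinearMap.id : (∀ j, F j) →ₗ[A] _) =
      ∑ j, LinearMap.single A F j ∘ₗ LinearMap.id ∘ₗ LinearMap.proj j := by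
    ext x
    simp
  rw [this]
  exact sum_mem fun j _ =>
    factorThrough_comp_left _ (factorThrough_comp_right _ (h j))

lemma id_mem_factorThrough_component {ι : Type} {F : ι → Type} [∀ j, AddCommGroup (F j)]
    [∀ j, Module A (F j)] (j : ι) :
    (LinearMap.id : F j →ₗ[A] F j) ∈ factorThrough (A := A) (∀ j, F j) (F j) (F j) := by
  classical
  rw [← LinearMap.proj_comp_single_same A F j]
  exact comp_mem_factorThrough _ _

lemma LiftsAlong.of_id_mem (h : LiftsAlong (A := A) T Y)
    (hX : (LinearMap.id : X →ₗ[A] X) ∈ factorThrough (A := A) T X X) :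
    LiftsAlong (A := A) X Y := by
  intro L C _ _ _ _ i p hi hp hip φ
  suffices ∀ χ ∈ factorThrough (A := A) T X X, ∃ ψ : X →ₗ[A] L, p ∘ₗ ψ = φ ∘ₗ χ from this _ hX
  intro χ hχ
  induction hχ using AddSubmonoid.closure_induction with
  | mem χ hχ =>
    obtain ⟨a, b, rfl⟩ := hχ
    obtain ⟨ψ, hψ⟩ := h L C i p hi hp hip (φ ∘ₗ b)
    exact ⟨ψ ∘ₗ a, by rw [← LinearMap.comp_assoc, hψ]; rfl⟩
  | zero => exact ⟨0, by simp⟩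
  | add χ₁ χ₂ _ _ h₁ h₂ =>
    obtain ⟨ψ₁, h₁⟩ := h₁
    obtain ⟨ψ₂, h₂⟩ := h₂
    exact ⟨ψ₁ + ψ₂, by rw [LinearMap.comp_add, LinearMap.comp_add, h₁, h₂]⟩

lemma ExtendsAlong.of_id_mem (h : ExtendsAlong (A := A) X T)
    (hY : (LinearMap.id : Y →ₗ[A] Y) ∈ factorThrough (A := A) T Y Y) :
    ExtendsAlong (A := A) X Y := by
  intro K L _ _ _ _ i p hi hp hip f
  suffices ∀ χ ∈ factorThrough (A := A) T Y Y, ∃ g : L →ₗ[A] Y, g ∘ₗ i = χ ∘ₗ f from this _ hY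
  intro χ hχ
  induction hχ using AddSubmonoid.closure_induction with
  | mem χ hχ =>
    obtain ⟨a, b, rfl⟩ := hχ
    obtain ⟨g, hg⟩ := h K L i p hi hp hip (a ∘ₗ f)
    exact ⟨b ∘ₗ g, by rw [LinearMap.comp_assoc, hg]; rfl⟩
  | zero => exact ⟨0, by simp⟩
  | add χ₁ χ₂ _ _ h₁ h₂ =>
    obtain ⟨g₁, h₁⟩ := h₁
    obtain ⟨g₂, h₂⟩ := h₂
    exact ⟨g₁ + g₂, by rw [LinearMap.add_comp, LinearMap.add_comp, h₁, h₂]⟩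

/-- Maps that are finite sums of maps factoring through `T` extend along an injection whose
cokernel has no extensions by `T`. -/
lemma ExtendsAlong.exists_extension_mem {X₁ X₂ : Type} [AddCommGroup X₁] [Module A X₁]
    [AddCommGroup X₂] [Module A X₂] (h : ExtendsAlong (A := A) X₂ T) {α : X₁ →ₗ[A] X}
    {β : X →ₗ[A] X₂} (hα : Function.Injective α) (hβ : Function.Surjective β)
    (hαβ : Function.Exact α β) {φ : X₁ →ₗ[A] Y} (hφ : φ ∈ factorThrough (A := A) T X₁ Y) :
    ∃ ψ ∈ factorThrough (A := A) T X Y, ψ ∘ₗ α = φ := by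
  induction hφ using AddSubmonoid.closure_induction with
  | mem φ hφ =>
    obtain ⟨a, b, rfl⟩ := hφ
    obtain ⟨g, rfl⟩ := h X₁ X α β hα hβ hαβ a
    exact ⟨b ∘ₗ g, comp_mem_factorThrough _ _, rfl⟩
  | zero => exact ⟨0, zero_mem _, by simp⟩
  | add φ₁ φ₂ _ _ h₁ h₂ =>
    obtain ⟨ψ₁, hm₁, rfl⟩ := h₁
    obtain ⟨ψ₂, hm₂, rfl⟩ := h₂
    exact ⟨ψ₁ + ψ₂, add_mem hm₁ hm₂, LinearMap.add_comp _ _ _⟩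

end Factor

section Tilting

variable {R : Type} [CommRing R] {A : Type} [Ring A] [Algebra R A]
  {Λ : Type}

lemma TensorFactor.id_mem_factorThrough {F : Λ → Type} [∀ l, AddCommGroup (F l)]
    [∀ l, Module R (F l)] [∀ l, Module A (F l)] [∀ l, IsScalarTower R A (F l)] {S : Set Λ}
    {X : Type} [AddCommGroup X] [Module A X] (t : TensorFactor R A Λ F S X) :
    (LinearMap.id : X →ₗ[A] X) ∈ factorThrough (A := A) (F t.lam) X X := by
  have := t.fin
  have := t.proj
  obtain ⟨n, f, g, -, -, hfg⟩ := Module.Finite.exists_comp_eq_id_of_projective R t.U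
  let a : Fin n → TensorProduct R (F t.lam) t.U →ₗ[A] F t.lam := fun j =>
    (TensorProduct.AlgebraTensorModule.rid R A (F t.lam)).toLinearMap ∘ₗ
      TensorProduct.AlgebraTensorModule.map LinearMap.id (LinearMap.proj j ∘ₗ g)
  let b : Fin n → F t.lam →ₗ[A] TensorProduct R (F t.lam) t.U := fun j =>
    TensorProduct.AlgebraTensorModule.map LinearMap.id (f ∘ₗ LinearMap.single R (fun _ => R) j) ∘ₗ
      (TensorProduct.AlgebraTensorModule.rid R A (F t.lam)).symm.toLinearMap
  have hab : ∑ j, b j ∘ₗ a j = LinearMap.id := by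
    refine LinearMap.ext fun y => ?_
    induction y using TensorProduct.induction_on with
    | zero => rw [map_zero, map_zero]
    | add x y hx hy => rw [map_add, map_add, hx, hy]
    | tmul d u =>
      have hu : ∑ j, f (Pi.single j (g u j)) = u := by
        rw [← map_sum, Finset.univ_sum_single]
        exact congrArg (fun k => k u) hfg
      have hj : ∀ j, b j (a j (d ⊗ₜ[R] u)) = d ⊗ₜ[R] f (Pi.single j (g u j)) := fun j => by
        have : f (Pi.single j (g u j)) = g u j • f (Pi.single j 1) := by
          rw [← map_smul, ← Pi.single_smul, smul_eq_mul, mul_one]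
        rw [this, ← TensorProduct.smul_tmul]
        rfl
      simp only [LinearMap.sum_apply, LinearMap.comp_apply, LinearMap.id_apply, hj]
      rw [← TensorProduct.tmul_sum, hu]
  have hX : (LinearMap.id : X →ₗ[A] X) =
      t.iso.symm.toLinearMap ∘ₗ (∑ j, b j ∘ₗ a j) ∘ₗ t.iso.toLinearMap := by
    rw [hab]
    ext x
    simp
  rw [hX]
  exact factorThrough_comp_left _ (factorThrough_comp_right _
    (sum_mem fun j _ => comp_mem_factorThrough _ _))

/-- A property of modules that holds for zero modules and for the factors `F(λ) ⊗_R U`, and is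
stable under extensions, holds for filtered modules. -/
lemma InFilt.induction {F : Λ → Type} [∀ l, AddCommGroup (F l)]
    [∀ l, Module R (F l)] [∀ l, Module A (F l)] [∀ l, IsScalarTower R A (F l)] {S : Set Λ}
    (P : ∀ (X : Type) [AddCommGroup X] [Module A X], Prop)
    (zero : ∀ (X : Type) [AddCommGroup X] [Module A X], Subsingleton X → P X)
    (ext : ∀ (X₁ X X₂ : Type) [AddCommGroup X₁] [Module A X₁] [AddCommGroup X] [Module A X]
      [AddCommGroup X₂] [Module A X₂] (α : X₁ →ₗ[A] X) (β : X →ₗ[A] X₂), Function.Injective α →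
      Function.Surjective β → Function.Exact α β → P X₁ → P X₂ → P X)
    (factor : ∀ (X : Type) [AddCommGroup X] [Module A X], TensorFactor R A Λ F S X → P X)
    {X : Type} [AddCommGroup X] [Module A X] (hX : InFilt R A Λ F S X) : P X := by
  obtain ⟨-, n, c, h0, hn, hmono, hc⟩ := hX
  have key : ∀ i : Fin (n + 1), P (c i) := by
    intro i
    induction i using Fin.induction with
    | zero =>
      refine zero _ ?_
      rw [h0]
      infer_instance
    | succ i ih =>
      obtain ⟨t⟩ := hc i
      refine ext _ _ _ (Submodule.inclusion (hmono i.castSucc_le_succ))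
        (Submodule.mkQ _) (Submodule.inclusion_injective _) (Submodule.mkQ_surjective _) ?_ ih
        (factor _ t)
      intro x
      rw [Submodule.mkQ_apply, Submodule.Quotient.mk_eq_zero, Submodule.mem_comap]
      exact ⟨fun hx => ⟨⟨x, hx⟩, rfl⟩, by rintro ⟨y, rfl⟩; exact y.2⟩
  have hlast := key (Fin.last n)
  rw [hn] at hlast
  exact ext _ X PUnit (⊤ : Submodule A X).subtype 0 (Submodule.injective_subtype _)
    (fun y => ⟨0, Subsingleton.elim _ _⟩)
    (fun x => ⟨fun _ => ⟨⟨x, trivial⟩, rfl⟩, fun _ => rfl⟩) hlast (zero _ inferInstance)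

lemma InFilt.extendsAlong {F : Λ → Type} [∀ l, AddCommGroup (F l)]
    [∀ l, Module R (F l)] [∀ l, Module A (F l)] [∀ l, IsScalarTower R A (F l)] {S : Set Λ}
    {X N : Type} [AddCommGroup X] [Module A X] [AddCommGroup N] [Module A N]
    (hF : ∀ l, LiftsAlong (A := A) (F l) N) (hX : InFilt R A Λ F S X) :
    ExtendsAlong (A := A) X N :=
  InFilt.induction (fun X _ _ => ExtendsAlong (A := A) X N)
    (fun _ _ _ _ => LiftsAlong.of_subsingleton_left.extendsAlong)
    (fun _ _ _ _ _ _ _ _ _ _ _ hα hβ hαβ => ExtendsAlong.of_exact hα hβ hαβ)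
    (fun _ _ _ t => ((hF t.lam).of_id_mem t.id_mem_factorThrough).extendsAlong) hX

lemma InFilt.liftsAlong {F : Λ → Type} [∀ l, AddCommGroup (F l)]
    [∀ l, Module R (F l)] [∀ l, Module A (F l)] [∀ l, IsScalarTower R A (F l)] {S : Set Λ}
    {M X : Type} [AddCommGroup X] [Module A X] [AddCommGroup M] [Module A M]
    (hF : ∀ l, LiftsAlong (A := A) M (F l)) (hX : InFilt R A Λ F S X) :
    LiftsAlong (A := A) M X :=
  InFilt.induction (fun X _ _ => LiftsAlong (A := A) M X)
    (fun _ _ _ _ => LiftsAlong.of_subsingleton_right)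
    (fun _ _ _ _ _ _ _ _ _ _ _ hα hβ hαβ => LiftsAlong.of_exact hα hβ hαβ)
    (fun _ _ _ t => ((hF t.lam).extendsAlong.of_id_mem t.id_mem_factorThrough).liftsAlong) hX

variable [PartialOrder Λ]
  {Δ : Λ → Type} [∀ l, AddCommGroup (Δ l)] [∀ l, Module R (Δ l)]
  [∀ l, Module A (Δ l)] [∀ l, IsScalarTower R A (Δ l)]
  {Nb : Λ → Type} [∀ l, AddCommGroup (Nb l)] [∀ l, Module R (Nb l)]
  [∀ l, Module A (Nb l)] [∀ l, IsScalarTower R A (Nb l)]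
  {T : Λ → Type} [∀ l, AddCommGroup (T l)] [∀ l, Module A (T l)]
  {Q : Λ → Type} [∀ l, AddCommGroup (Q l)] [∀ l, Module A (Q l)]

lemma IsCharTilting.liftsAlong (hN : ∀ l m, LiftsAlong (A := A) (Δ l) (Nb m))
    (hT : IsCharTilting R A Λ Δ Nb T) (l m : Λ) : LiftsAlong (A := A) (Δ l) (T m) := by
  obtain ⟨-, g, hg, hY⟩ := hT m
  refine LiftsAlong.of_exact (α := (LinearMap.ker g).subtype) (β := g)
    (Submodule.injective_subtype _) hg (fun x => ?_) (hY.liftsAlong (hN l)) (hN l m)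
  simp

lemma IsCharTilting.id_mem_factorThrough [Fintype Λ] (hN : ∀ l m, LiftsAlong (A := A) (Δ l) (Nb m))
    (hT : IsCharTilting R A Λ Δ Nb T) (hQ : IsCharTilting R A Λ Δ Nb Q) (l : Λ) :
    (LinearMap.id : T l →ₗ[A] T l) ∈ factorThrough (A := A) (∀ l, Q l) (T l) (T l) := by
  induction l using WellFoundedLT.induction with
  | ind l ih =>
  have hΔT := hT.liftsAlong hN
  have hΔQ := hQ.liftsAlong hN
  obtain ⟨⟨f, hf, hX⟩, -⟩ := hT l
  obtain ⟨⟨f', hf', hX'⟩, -⟩ := hQ l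
  have hex : ∀ {m : Λ} {Y : Type} [AddCommGroup Y] [Module A Y] (k : Δ m →ₗ[A] Y),
      Function.Exact k (LinearMap.range k).mkQ := fun k x => by simp
  obtain ⟨u, hu⟩ := hX.extendsAlong (fun m => hΔQ m l) _ _ f (Submodule.mkQ _) hf
    (Submodule.mkQ_surjective _) (hex f) f'
  obtain ⟨v, hv⟩ := hX'.extendsAlong (fun m => hΔT m l) _ _ f' (Submodule.mkQ _) hf'
    (Submodule.mkQ_surjective _) (hex f') f
  obtain ⟨w, hw⟩ := exists_comp_eq_of_ker_le (Submodule.mkQ_surjective (LinearMap.range f))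
    (LinearMap.id - v ∘ₗ u) (fun x hx => by
      obtain ⟨d, rfl⟩ := (hex f x).1 hx
      have h₁ : u (f d) = f' d := congrArg (fun k => k d) hu
      have h₂ : v (f' d) = f d := congrArg (fun k => k d) hv
      simp [h₁, h₂])
  have key : (∀ φ : (T l ⧸ LinearMap.range f) →ₗ[A] T l,
      φ ∈ factorThrough (A := A) (∀ l, Q l) _ (T l)) ∧
      ExtendsAlong (A := A) (T l ⧸ LinearMap.range f) (∀ l, Q l) := by
    refine InFilt.induction (fun X _ _ => (∀ φ : X →ₗ[A] T l,
      φ ∈ factorThrough (A := A) (∀ l, Q l) X (T l)) ∧ ExtendsAlong (A := A) X (∀ l, Q l))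
      ?_ ?_ ?_ hX
    · refine fun X _ _ _ => ⟨fun φ => ?_, LiftsAlong.of_subsingleton_left.extendsAlong⟩
      rw [Subsingleton.elim φ 0]
      exact zero_mem _
    · rintro X₁ X X₂ _ _ _ _ _ _ α β hα hβ hαβ ⟨h₁, h₁'⟩ ⟨h₂, h₂'⟩
      refine ⟨fun φ => ?_, h₁'.of_exact hα hβ hαβ h₂'⟩
      obtain ⟨ψ, hψ, hψα⟩ := h₂'.exists_extension_mem hα hβ hαβ (h₁ (φ ∘ₗ α))
      obtain ⟨χ, hχ⟩ := exists_comp_eq_of_ker_le hβ (φ - ψ) (fun x hx => by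
        obtain ⟨y, rfl⟩ := (hαβ x).1 hx
        have : ψ (α y) = φ (α y) := congrArg (fun k => k y) hψα
        simp [this])
      rw [← sub_add_cancel φ ψ, ← hχ]
      exact add_mem (factorThrough_comp_right β (h₂ χ)) hψ
    · intro X _ _ t
      have ht := t.id_mem_factorThrough
      refine ⟨fun φ => ?_, (LiftsAlong.of_id_mem
        (ExtendsAlong.pi fun j => (hΔQ t.lam j).extendsAlong).liftsAlong ht).extendsAlong⟩
      obtain ⟨⟨k, hk, hXk⟩, -⟩ := hT t.lam
      suffices ∀ χ : Δ t.lam →ₗ[A] T l, χ ∈ factorThrough (A := A) (∀ l, Q l) _ (T l) by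
        have hφ := factorThrough_comp_left φ ht
        refine AddSubmonoid.closure_le.2 ?_ hφ
        rintro _ ⟨a, b, rfl⟩
        exact factorThrough_comp_right a (this b)
      intro χ
      obtain ⟨χ', rfl⟩ := hXk.extendsAlong (fun m => hΔT m l) _ _ k (Submodule.mkQ _) hk
        (Submodule.mkQ_surjective _) (hex k) χ
      have hχ' : χ' ∈ factorThrough (A := A) (∀ l, Q l) (T t.lam) (T l) :=
        factorThrough_of_id_mem_left (ih t.lam t.mem) χ'
      exact factorThrough_comp_right k hχ'
  have hid : (LinearMap.id : T l →ₗ[A] T l) = w ∘ₗ (LinearMap.range f).mkQ + v ∘ₗ u := by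
    rw [hw, sub_add_cancel]
  rw [hid]
  refine add_mem (factorThrough_comp_right _ (key.1 w)) (factorThrough_comp_left v ?_)
  exact factorThrough_comp_right u (id_mem_factorThrough_component l)

end Tilting

section Morita

variable (A : Type) [Ring A] (T Q : Type) [AddCommGroup T] [Module A T] [AddCommGroup Q]
  [Module A Q]

/-- The group of `A`-linear maps `T → Q`, regarded as a right module over `End_A(T)`. -/
def HomRight : Type := T →ₗ[A] Q

instance : AddCommGroup (HomRight A T Q) := inferInstanceAs (AddCommGroup (T →ₗ[A] Q))

instance : Module (Module.End A T)ᵐᵒᵖ (HomRight A T Q) where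
  smul e f := LinearMap.comp (f : T →ₗ[A] Q) e.unop
  one_smul _ := rfl
  mul_smul _ _ _ := rfl
  smul_zero e := LinearMap.zero_comp (M₃ := Q) e.unop
  smul_add e f g := LinearMap.add_comp (M₃ := Q) e.unop g f
  add_smul e e' f := LinearMap.comp_add (M₃ := Q) e.unop e'.unop f
  zero_smul f := LinearMap.comp_zero (M₃ := Q) f

/-- The coinduced right `End_A(Q)`-module `Hom_{End_A(T)}(Hom_A(T, Q), M)` of a right
`End_A(T)`-module `M`. -/
def CoindHom (M : Type) [AddCommGroup M] [Module (Module.End A T)ᵐᵒᵖ M] : Type :=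
  HomRight A T Q →ₗ[(Module.End A T)ᵐᵒᵖ] M

section

variable (M : Type) [AddCommGroup M] [Module (Module.End A T)ᵐᵒᵖ M]

instance : AddCommGroup (CoindHom A T Q M) :=
  inferInstanceAs (AddCommGroup (HomRight A T Q →ₗ[(Module.End A T)ᵐᵒᵖ] M))

instance : FunLike (CoindHom A T Q M) (HomRight A T Q) M :=
  inferInstanceAs (FunLike (HomRight A T Q →ₗ[(Module.End A T)ᵐᵒᵖ] M) _ _)

instance : LinearMapClass (CoindHom A T Q M) (Module.End A T)ᵐᵒᵖ (HomRight A T Q) M :=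
  inferInstanceAs (LinearMapClass (HomRight A T Q →ₗ[(Module.End A T)ᵐᵒᵖ] M) _ _ _)

/-- Postcomposition with an endomorphism of `Q`, as an endomorphism of `Hom_A(T, Q)`. -/
def HomRight.postcomp (e : Module.End A Q) :
    HomRight A T Q →ₗ[(Module.End A T)ᵐᵒᵖ] HomRight A T Q where
  toFun f := LinearMap.comp e (f : T →ₗ[A] Q)
  map_add' f g := LinearMap.comp_add (M₃ := Q) f g e
  map_smul' _ _ := rfl

instance : Module (Module.End A Q)ᵐᵒᵖ (CoindHom A T Q M) where
  smul e Φ := LinearMap.comp (Φ : HomRight A T Q →ₗ[(Module.End A T)ᵐᵒᵖ] M)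
    (HomRight.postcomp A T Q e.unop)
  one_smul _ := rfl
  mul_smul _ _ _ := rfl
  smul_zero _ := LinearMap.zero_comp (M₃ := M) _
  smul_add _ f g := LinearMap.add_comp (M₃ := M) _ g f
  add_smul e e' Φ := LinearMap.ext fun x =>
    map_add Φ (HomRight.postcomp A T Q e.unop x)
      (HomRight.postcomp A T Q e'.unop x)
  zero_smul Φ := LinearMap.ext fun _ =>
    map_zero Φ

end

/-- Coinduction `M ↦ Hom_{End_A(T)}(Hom_A(T, Q), M)` as a functor. -/
def coindHomFunctor :
    ModuleCat.{0} (Module.End A T)ᵐᵒᵖ ⥤ ModuleCat.{0} (Module.End A Q)ᵐᵒᵖ where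
  obj M := ModuleCat.of _ (CoindHom A T Q M)
  map {M _} φ := ModuleCat.ofHom
    { toFun := fun Φ : HomRight A T Q →ₗ[(Module.End A T)ᵐᵒᵖ] M => LinearMap.comp φ.hom Φ
      map_add' := fun Φ Ψ => LinearMap.ext fun x => map_add φ.hom (Φ x) (Ψ x)
      map_smul' := fun _ _ => rfl }
  map_id _ := rfl
  map_comp _ _ := rfl

section

variable (M : Type) [AddCommGroup M] [Module (Module.End A T)ᵐᵒᵖ M]

/-- The unit `m ↦ (b ↦ (a ↦ m · (b ∘ a)))` of the coinduction equivalence. -/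
def coindHomUnit :
    M →ₗ[(Module.End A T)ᵐᵒᵖ] CoindHom A Q T (CoindHom A T Q M) where
  toFun m :=
    { toFun := fun b =>
        { toFun := fun a => (MulOpposite.op
            (LinearMap.comp (b : Q →ₗ[A] T) (a : T →ₗ[A] Q) : Module.End A T)) • m
          map_add' := fun a a' => by
            rw [← add_smul, ← MulOpposite.op_add]
            exact congrArg (fun e : Module.End A T => MulOpposite.op e • m)
              (LinearMap.comp_add (M₃ := T) a a' b)
          map_smul' := fun e a => mul_smul e (MulOpposite.op
            (LinearMap.comp (b : Q →ₗ[A] T) (a : T →ₗ[A] Q) : Module.End A T)) m }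
      map_add' := fun b b' => LinearMap.ext fun a => by
        refine Eq.trans ?_ (add_smul (MulOpposite.op
          (LinearMap.comp (b : Q →ₗ[A] T) (a : T →ₗ[A] Q) : Module.End A T)) (MulOpposite.op
          (LinearMap.comp (b' : Q →ₗ[A] T) (a : T →ₗ[A] Q) : Module.End A T)) m)
        exact congrArg (fun e : Module.End A T => MulOpposite.op e • m)
          (LinearMap.add_comp (M₃ := T) a b' b)
      map_smul' := fun _ _ => rfl }
  map_add' m m' := LinearMap.ext fun b => LinearMap.ext fun a => smul_add _ m m'
  map_smul' e m := LinearMap.ext fun b => LinearMap.ext fun a =>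
    (mul_smul (MulOpposite.op
      (LinearMap.comp (b : Q →ₗ[A] T) (a : T →ₗ[A] Q) : Module.End A T)) e m).symm

variable {A T Q}

lemma coindHomUnit_bijective
    (h : (LinearMap.id : T →ₗ[A] T) ∈ factorThrough (A := A) Q T T) :
    Function.Bijective (coindHomUnit A T Q M) := by
  obtain ⟨n, a, b, hab⟩ := exists_sum_eq_of_mem_factorThrough h
  have hone : ∀ m : M, ∑ j, MulOpposite.op (b j ∘ₗ a j : Module.End A T) • m = m := by
    intro m
    rw [← Finset.sum_smul, ← Finset.op_sum, hab]
    exact one_smul _ m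
  constructor
  · rw [injective_iff_map_eq_zero]
    intro m hm
    rw [← hone m]
    refine Finset.sum_eq_zero fun j _ => ?_
    exact congrArg (fun Φ : HomRight A Q T →ₗ[(Module.End A Q)ᵐᵒᵖ] CoindHom A T Q M =>
      Φ (b j) (a j)) hm
  · intro (Φ : HomRight A Q T →ₗ[(Module.End A Q)ᵐᵒᵖ] CoindHom A T Q M)
    let b' : Fin n → HomRight A Q T := b
    let ev : HomRight A Q T → HomRight A T Q → M := fun b a =>
      Φ b a
    have hev_left : ∀ (b : HomRight A Q T) (e : Module.End A T) (a : HomRight A T Q),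
        ev b (MulOpposite.op e • a) = MulOpposite.op e • ev b a := fun b e a =>
      map_smul (Φ b) (MulOpposite.op e) a
    have hev_mid : ∀ (b : HomRight A Q T) (e : Module.End A Q) (a : HomRight A T Q),
        ev (MulOpposite.op e • b) a = ev b (HomRight.postcomp A T Q e a) := fun b e a =>
      congrArg (fun Ψ : CoindHom A T Q M => Ψ a)
        (map_smul Φ (MulOpposite.op e) b)
    have hev_sum : ∀ (c : Fin n → HomRight A Q T) (x : HomRight A T Q),
        ev (∑ j, c j) x = ∑ j, ev (c j) x := fun c x => by
      let evx : HomRight A Q T →+ M :=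
        { toFun := fun b => ev b x
          map_zero' := congrArg (fun Ψ : CoindHom A T Q M => Ψ x)
            (map_zero Φ)
          map_add' := fun b b' => congrArg
            (fun Ψ : CoindHom A T Q M => Ψ x) (map_add Φ b b') }
      exact map_sum evx c Finset.univ
    refine ⟨∑ j, ev (b j) (a j), LinearMap.ext fun y => LinearMap.ext fun x => ?_⟩
    change MulOpposite.op (LinearMap.comp (y : Q →ₗ[A] T) (x : T →ₗ[A] Q) : Module.End A T) •
      ∑ j, ev (b j) (a j) = ev y x
    have hy : ∀ y : Q →ₗ[A] T, ∑ j, b j ∘ₗ (a j ∘ₗ y) = y := fun y => by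
      ext q
      simpa using congrArg (fun k => k (y q)) hab
    have hy' : ∑ j, (MulOpposite.op (LinearMap.comp (a j) (y : Q →ₗ[A] T) : Module.End A Q) •
        b' j) = y := hy y
    rw [Finset.smul_sum]
    conv_rhs => rw [← hy', hev_sum]
    refine Finset.sum_congr rfl fun j _ => ?_
    exact (hev_left (b j) _ (a j)).symm.trans (hev_mid (b' j)
      (LinearMap.comp (a j) (y : Q →ₗ[A] T)) x).symm

/-- The unit of the coinduction equivalence is a natural isomorphism when `T ∈ add Q`. -/
def coindHomUnitIso (h : (LinearMap.id : T →ₗ[A] T) ∈ factorThrough (A := A) Q T T) :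
    𝟭 (ModuleCat.{0} (Module.End A T)ᵐᵒᵖ) ≅ coindHomFunctor A T Q ⋙ coindHomFunctor A Q T :=
  NatIso.ofComponents
    (fun M => (LinearEquiv.ofBijective (coindHomUnit A T Q M)
      (coindHomUnit_bijective M h)).toModuleIso)
    (fun φ => by
      ext m
      exact LinearMap.ext fun b => LinearMap.ext fun a => (map_smul φ.hom _ m).symm)

end

variable {A T Q}

/-- If `T ∈ add Q` and `Q ∈ add T`, then `End_A(T)ᵒᵖ` and `End_A(Q)ᵒᵖ` are Morita equivalent. -/
lemma moritaEquiv_of_inAdd (hT : InAdd A Q T) (hQ : InAdd A T Q) :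
    MoritaEquiv (Module.End A T)ᵐᵒᵖ (Module.End A Q)ᵐᵒᵖ :=
  ⟨CategoryTheory.Equivalence.mk (coindHomFunctor A T Q) (coindHomFunctor A Q T)
    (coindHomUnitIso (inAdd_iff_id_mem.1 hT)) (coindHomUnitIso (inAdd_iff_id_mem.1 hQ)).symm⟩

end Morita

lemma InAdd.trans {A : Type} [Ring A] {T Q X : Type} [AddCommGroup T] [Module A T]
    [AddCommGroup Q] [Module A Q] [AddCommGroup X] [Module A X] (hT : InAdd A Q T)
    (hX : InAdd A T X) : InAdd A Q X :=
  inAdd_iff_id_mem.2 (factorThrough_mono (inAdd_iff_id_mem.1 hT) (inAdd_iff_id_mem.1 hX))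

/-- If `T` and `Q` are both characteristic tilting modules of the split
quasi-hereditary algebra `(A, {Δ(λ)})`, then `add T = add Q`, and `End_A(T)^op` and
`End_A(Q)^op` are Morita equivalent. -/
theorem characteristic_tilting_add_unique
    (R : Type) [CommRing R] [IsNoetherianRing R]
    (A : Type) [Ring A] [Algebra R A]
    (Λ : Type) [Fintype Λ] [PartialOrder Λ]
    (Δ : Λ → Type) [∀ l, AddCommGroup (Δ l)] [∀ l, Module R (Δ l)]
    [∀ l, Module A (Δ l)] [∀ l, IsScalarTower R A (Δ l)]
    (Nb : Λ → Type) [∀ l, AddCommGroup (Nb l)] [∀ l, Module R (Nb l)]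
    [∀ l, Module A (Nb l)] [∀ l, IsScalarTower R A (Nb l)]
    (h : SplitQH R A Λ Δ) (hc : IsCostandard R A Λ Δ Nb)
    (T : Λ → Type) [∀ l, AddCommGroup (T l)] [∀ l, Module A (T l)]
    (hT : IsCharTilting R A Λ Δ Nb T)
    (Q : Λ → Type) [∀ l, AddCommGroup (Q l)] [∀ l, Module A (Q l)]
    (hQ : IsCharTilting R A Λ Δ Nb Q) :
    (∀ (X : Type) [AddCommGroup X] [Module A X],
      InAdd A (∀ l, T l) X ↔ InAdd A (∀ l, Q l) X) ∧
    MoritaEquiv (Module.End A (∀ l, T l))ᵐᵒᵖ (Module.End A (∀ l, Q l))ᵐᵒᵖ := by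
  have hN : ∀ l m, LiftsAlong (A := A) (Δ l) (Nb m) := fun l m =>
    liftsAlong_of_extVanish (hc.2.2.2 l m 1 one_pos)
  have hTQ : InAdd A (∀ l, Q l) (∀ l, T l) :=
    inAdd_iff_id_mem.2 (id_mem_factorThrough_pi (hT.id_mem_factorThrough hN hQ))
  have hQT : InAdd A (∀ l, T l) (∀ l, Q l) :=
    inAdd_iff_id_mem.2 (id_mem_factorThrough_pi (hQ.id_mem_factorThrough hN hT))
  exact ⟨fun X _ _ => ⟨hTQ.trans, hQT.trans⟩, moritaEquiv_of_inAdd hTQ hQT⟩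

end
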